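/- Assume 1 − (d−1)ν − (2K−1)dμ_B > 0. Let S ⊆ I1 with |S| = k (0 ≤ k < K), let P_S denote the orthogonal projection onto the column span of the blocks {A_l : l ∈ S}, and set v = Σ_{l∈I1∖S} A_l x̃_l. Then max_{l∈I1} ‖A_l^T P_S v‖_2 ≤ dμ_B (K−k) · max_{l∈I1∖S} ‖x̃_l‖_2. -/

import Mathlib

/- Setting: a measurement matrix `A ∈ ℝ^{m×n}` with `n = L·d`, partitioned into `L` column
blocks of size `m×d`; columns are indexed by pairs `(l, j)` (block `l`, position `j`). -/

noncomputable section

open Finset Matrix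

/-- Euclidean (ℓ₂) norm of a finitely indexed real vector. -/
def e2norm {ι : Type*} [Fintype ι] (v : ι → ℝ) : ℝ := Real.sqrt (∑ i, v i ^ 2)

/-- Euclidean inner (dot) product of two real vectors. -/
def dotp {ι : Type*} [Fintype ι] (u v : ι → ℝ) : ℝ := ∑ i, u i * v i

/-- The `(l, j)` column of the block matrix `A` (block `l`, position `j` inside the block). -/
def acol {m L d : ℕ} (A : Matrix (Fin m) (Fin L × Fin d) ℝ) (l : Fin L) (j : Fin d) :
    Fin m → ℝ :=
  fun i => A i (l, j)

/-- `A_lᵀ v` : correlation of the `l`-th block of `A` with a vector `v ∈ ℝ^m`. -/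
def blkT {m L d : ℕ} (A : Matrix (Fin m) (Fin L × Fin d) ℝ) (l : Fin L) (v : Fin m → ℝ) :
    Fin d → ℝ :=
  fun j => dotp (acol A l j) v

/-- Spectral norm (largest singular value) `ρ(X)` of a real matrix, as the supremum of
`‖Xu‖₂ / ‖u‖₂` over nonzero `u`. -/
def specNorm {p q : ℕ} (X : Matrix (Fin p) (Fin q) ℝ) : ℝ :=
  ⨆ u : {u : Fin q → ℝ // u ≠ 0}, e2norm (X *ᵥ u.1) / e2norm u.1

/-- The `d × d` cross-Gram matrix `A_iᵀ A_j` of two blocks of `A`. -/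
def bgram {m L d : ℕ} (A : Matrix (Fin m) (Fin L × Fin d) ℝ) (i j : Fin L) :
    Matrix (Fin d) (Fin d) ℝ :=
  fun a b => dotp (acol A i a) (acol A j b)

/-- Block-coherence `μ_B = max_{i ≠ j} (1/d) ρ(A_iᵀ A_j)`. -/
def blockCoh {m L d : ℕ} (A : Matrix (Fin m) (Fin L × Fin d) ℝ) : ℝ :=
  ⨆ p : {p : Fin L × Fin L // p.1 ≠ p.2},
    (1 / (d : ℝ)) * specNorm (bgram A p.1.1 p.1.2)

/-- Sub-coherence `ν`: the maximum of `|a_iᵀ a_j|` over pairs of distinct columns lying in the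
same block of `A`. -/
def subCoh {m L d : ℕ} (A : Matrix (Fin m) (Fin L × Fin d) ℝ) : ℝ :=
  ⨆ t : {t : Fin L × Fin d × Fin d // t.2.1 ≠ t.2.2},
    |dotp (acol A t.1.1 t.1.2.1) (acol A t.1.1 t.1.2.2)|

/- The Gram matrix of the blocks in `S` is block diagonally dominant: its diagonal blocks are
bounded below by `1 - (d - 1)ν` and its off-diagonal blocks have norm at most `dμ_B`. Write
`P_S v = ∑_{l ∈ S} A_l c_l`. The normal equations say that the Gram matrix maps `(c_j)` to
`(A_lᵀ v)_{l ∈ S}`, and `‖A_lᵀ v‖ ≤ dμ_B ∑_{j ∈ I1 \ S} ‖x̃_j‖` because `l ∉ I1 \ S`. Summing the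
norms over the blocks, the coherence condition turns this into
`∑_{l ∈ S} ‖c_l‖ ≤ ∑_{j ∈ I1 \ S} ‖x̃_j‖`. Hence `A_lᵀ P_S v` for `l ∉ S`, a combination of
off-diagonal blocks applied to the `c_j`, obeys the same bound as for `l ∈ S`, where it equals
`A_lᵀ v`. -/

section BlockDiagonalDominance

variable {ι : Type*} {E : ι → Type*} [∀ i, SeminormedAddCommGroup (E i)]
  {S : Finset ι} {w : ∀ i, ι → E i} {r : ι → ℝ} {α δ : ℝ}

theorem mul_sum_le_sum_norm_of_diag_of_offDiag (hdiag : ∀ i ∈ S, α * r i ≤ ‖w i i‖)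
    (hoff : ∀ i ∈ S, ∀ j ∈ S, i ≠ j → ‖w i j‖ ≤ δ * r j) :
    (α - ((#S : ℝ) - 1) * δ) * ∑ i ∈ S, r i ≤ ∑ i ∈ S, ‖∑ j ∈ S, w i j‖ := by
  classical
  have hrow : ∀ i ∈ S, (α + δ) * r i - δ * ∑ j ∈ S, r j ≤ ‖∑ j ∈ S, w i j‖ := by
    intro i hi
    have hoffSum : ‖∑ j ∈ S.erase i, w i j‖ ≤ δ * ∑ j ∈ S.erase i, r j := by
      rw [mul_sum]
      exact norm_sum_le_of_le _ fun j hj =>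
        hoff i hi j (mem_of_mem_erase hj) (ne_of_mem_erase hj).symm
    have htri := norm_le_add_norm_add (w i i) (∑ j ∈ S.erase i, w i j)
    rw [← add_sum_erase S r hi, ← add_sum_erase S (w i) hi]
    linarith [hdiag i hi]
  calc (α - ((#S : ℝ) - 1) * δ) * ∑ i ∈ S, r i
      = ∑ i ∈ S, ((α + δ) * r i - δ * ∑ j ∈ S, r j) := by
        rw [sum_sub_distrib, ← mul_sum, sum_const, nsmul_eq_mul]
        ring
    _ ≤ ∑ i ∈ S, ‖∑ j ∈ S, w i j‖ := sum_le_sum hrow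

theorem sum_le_of_diag_of_offDiag_of_norm_sum_le {N : ℝ} (hδ : 0 ≤ δ) (hN : 0 ≤ N)
    (hα : 0 < α - (2 * (#S : ℝ) - 1) * δ) (hdiag : ∀ i ∈ S, α * r i ≤ ‖w i i‖)
    (hoff : ∀ i ∈ S, ∀ j ∈ S, i ≠ j → ‖w i j‖ ≤ δ * r j)
    (hsum : ∀ i ∈ S, ‖∑ j ∈ S, w i j‖ ≤ δ * N) :
    ∑ i ∈ S, r i ≤ N := by
  have hSδ : 0 ≤ #S * δ := by positivity
  have hpos : 0 < α - ((#S : ℝ) - 1) * δ := by linarith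
  refine le_of_mul_le_mul_left ?_ hpos
  calc (α - ((#S : ℝ) - 1) * δ) * ∑ i ∈ S, r i
      ≤ ∑ i ∈ S, ‖∑ j ∈ S, w i j‖ := mul_sum_le_sum_norm_of_diag_of_offDiag hdiag hoff
    _ ≤ #S * δ * N := by
        simpa only [nsmul_eq_mul, mul_assoc] using sum_le_card_nsmul S _ _ hsum
    _ ≤ (α - ((#S : ℝ) - 1) * δ) * N := mul_le_mul_of_nonneg_right (by linarith) hN

end BlockDiagonalDominance

section EuclideanNorm

variable {ι : Type*} [Fintype ι]

theorem e2norm_eq_norm_toLp (v : ι → ℝ) : e2norm v = ‖WithLp.toLp 2 v‖ := by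
  simp only [e2norm, EuclideanSpace.norm_eq, Real.norm_eq_abs, sq_abs]

theorem e2norm_nonneg (v : ι → ℝ) : 0 ≤ e2norm v :=
  Real.sqrt_nonneg _

theorem e2norm_pos {v : ι → ℝ} (hv : v ≠ 0) : 0 < e2norm v := by
  rw [e2norm_eq_norm_toLp, norm_pos_iff]
  exact (WithLp.toLp_eq_zero 2).not.2 hv

theorem e2norm_sq (v : ι → ℝ) : e2norm v ^ 2 = v ⬝ᵥ v := by
  rw [e2norm, Real.sq_sqrt (by positivity)]
  exact sum_congr rfl fun i _ => sq (v i)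

theorem e2norm_sum_le {κ : Type*} (T : Finset κ) (f : κ → ι → ℝ) :
    e2norm (∑ j ∈ T, f j) ≤ ∑ j ∈ T, e2norm (f j) := by
  simp only [e2norm_eq_norm_toLp, WithLp.toLp_sum]
  exact norm_sum_le _ _

theorem dotProduct_le_e2norm_mul_e2norm (u v : ι → ℝ) : u ⬝ᵥ v ≤ e2norm u * e2norm v :=
  Real.sum_mul_le_sqrt_mul_sqrt _ _ _

theorem mul_e2norm_le_of_mul_dotProduct_self_le {α : ℝ} {u w : ι → ℝ}
    (h : α * (u ⬝ᵥ u) ≤ u ⬝ᵥ w) : α * e2norm u ≤ e2norm w := by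
  obtain rfl | hu := eq_or_ne u 0
  · simp [e2norm]
  · refine le_of_mul_le_mul_left ?_ (e2norm_pos hu)
    calc e2norm u * (α * e2norm u) = α * (u ⬝ᵥ u) := by rw [← e2norm_sq]; ring
      _ ≤ e2norm u * e2norm w := h.trans (dotProduct_le_e2norm_mul_e2norm u w)

theorem sum_e2norm_le_card_mul_iSup {κ : Type*} (T : Finset κ) (x : κ → ι → ℝ) :
    ∑ l ∈ T, e2norm (x l) ≤ #T * ⨆ l : {l // l ∈ T}, e2norm (x l) := by
  rw [← nsmul_eq_mul]
  exact sum_le_card_nsmul _ _ _ fun l hl =>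
    le_ciSup (f := fun l : {l // l ∈ T} => e2norm (x l)) (Set.finite_range _).bddAbove ⟨l, hl⟩

theorem mul_dotProduct_self_le_dotProduct_mulVec {G : Matrix ι ι ℝ} {γ ν : ℝ} (hν : 0 ≤ ν)
    (hdiag : ∀ a, γ ≤ G a a) (hoff : ∀ a b, a ≠ b → |G a b| ≤ ν) (c : ι → ℝ) :
    (γ - ((Fintype.card ι : ℝ) - 1) * ν) * (c ⬝ᵥ c) ≤ c ⬝ᵥ G *ᵥ c := by
  classical
  have hterm : ∀ a b,
      (if a = b then (γ + ν) * (c a * c a) else 0) - ν * (|c a| * |c b|) ≤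
        c a * (G a b * c b) := by
    intro a b
    split_ifs with hab
    · subst hab
      rw [abs_mul_abs_self]
      linarith [mul_le_mul_of_nonneg_right (hdiag a) (mul_self_nonneg (c a))]
    · have habs : |c a * (G a b * c b)| ≤ ν * (|c a| * |c b|) := by
        rw [mul_left_comm, abs_mul, abs_mul]
        gcongr
        exact hoff a b hab
      linarith [neg_le_of_abs_le habs]
  have hcauchy : (∑ a, |c a|) ^ 2 ≤ Fintype.card ι * (c ⬝ᵥ c) := by
    simpa only [dotProduct, sq_abs, ← sq, card_univ] using
      sq_sum_le_card_mul_sum_sq (s := univ) (f := fun a => |c a|)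
  calc (γ - ((Fintype.card ι : ℝ) - 1) * ν) * (c ⬝ᵥ c)
      ≤ (γ + ν) * (c ⬝ᵥ c) - ν * (∑ a, |c a|) ^ 2 := by
        linarith [mul_le_mul_of_nonneg_left hcauchy hν]
    _ = ∑ a, ∑ b, ((if a = b then (γ + ν) * (c a * c a) else 0) - ν * (|c a| * |c b|)) := by
        simp only [sum_sub_distrib, sum_ite_eq, mem_univ, if_true, ← mul_sum, ← sum_mul,
          dotProduct, sq]
    _ ≤ ∑ a, ∑ b, c a * (G a b * c b) :=
        sum_le_sum fun a _ => sum_le_sum fun b _ => hterm a b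
    _ = c ⬝ᵥ G *ᵥ c := by simp only [dotProduct, mulVec, mul_sum]

end EuclideanNorm

section SpectralNorm

variable {p q : ℕ} (X : Matrix (Fin p) (Fin q) ℝ)

theorem specNorm_nonneg : 0 ≤ specNorm X :=
  Real.iSup_nonneg fun _ => div_nonneg (e2norm_nonneg _) (e2norm_nonneg _)

open scoped Matrix.Norms.L2Operator in
theorem bddAbove_range_e2norm_mulVec_div :
    BddAbove (Set.range fun u : {u : Fin q → ℝ // u ≠ 0} =>
      e2norm (X *ᵥ u.1) / e2norm u.1) := by
  refine ⟨‖X‖, ?_⟩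
  rintro _ ⟨⟨u, hu⟩, rfl⟩
  rw [div_le_iff₀ (e2norm_pos hu), e2norm_eq_norm_toLp, e2norm_eq_norm_toLp]
  exact X.l2_opNorm_mulVec (WithLp.toLp 2 u)

theorem e2norm_mulVec_le (u : Fin q → ℝ) : e2norm (X *ᵥ u) ≤ specNorm X * e2norm u := by
  obtain rfl | hu := eq_or_ne u 0
  · simp [e2norm]
  · exact (div_le_iff₀ (e2norm_pos hu)).1
      (le_ciSup (bddAbove_range_e2norm_mulVec_div X) ⟨u, hu⟩)

end SpectralNorm

section BlockMatrix

variable {m L d : ℕ} (A : Matrix (Fin m) (Fin L × Fin d) ℝ)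

/-- The `l`-th column block `A_l` of `A`, as a matrix; it lets the sums of the statement be
handled through matrix-vector products. -/
def colBlock (l : Fin L) : Matrix (Fin m) (Fin d) ℝ :=
  A.submatrix id (Prod.mk l)

theorem blkT_eq_mulVec (l : Fin L) (v : Fin m → ℝ) : blkT A l v = (colBlock A l)ᵀ *ᵥ v :=
  rfl

theorem bgram_eq_mul (i j : Fin L) : bgram A i j = (colBlock A i)ᵀ * colBlock A j :=
  rfl

theorem sum_colBlock_mulVec (T : Finset (Fin L)) (x : Fin L → Fin d → ℝ) :
    ∑ l ∈ T, colBlock A l *ᵥ x l = fun i => ∑ l ∈ T, ∑ j, A i (l, j) * x l j := by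
  ext i
  rw [Finset.sum_apply]
  rfl

theorem blkT_sum_colBlock_mulVec (l : Fin L) (T : Finset (Fin L)) (x : Fin L → Fin d → ℝ) :
    blkT A l (∑ j ∈ T, colBlock A j *ᵥ x j) = ∑ j ∈ T, bgram A l j *ᵥ x j := by
  simp only [blkT_eq_mulVec, bgram_eq_mul, mulVec_sum, mulVec_mulVec]

theorem blockCoh_nonneg : 0 ≤ blockCoh A :=
  Real.iSup_nonneg fun _ => mul_nonneg (by positivity) (specNorm_nonneg _)

theorem mul_blockCoh_nonneg : 0 ≤ d * blockCoh A :=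
  mul_nonneg d.cast_nonneg (blockCoh_nonneg A)

theorem subCoh_nonneg : 0 ≤ subCoh A :=
  Real.iSup_nonneg fun _ => abs_nonneg _

theorem abs_bgram_self_le_subCoh (l : Fin L) {a b : Fin d} (hab : a ≠ b) :
    |bgram A l l a b| ≤ subCoh A :=
  le_ciSup (f := fun t : {t : Fin L × Fin d × Fin d // t.2.1 ≠ t.2.2} =>
    |dotp (acol A t.1.1 t.1.2.1) (acol A t.1.1 t.1.2.2)|) (Set.finite_range _).bddAbove
    ⟨(l, a, b), hab⟩

theorem specNorm_bgram_le {i j : Fin L} (hij : i ≠ j) :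
    specNorm (bgram A i j) ≤ d * blockCoh A := by
  obtain rfl | hd := d.eq_zero_or_pos
  · have : IsEmpty {u : Fin 0 → ℝ // u ≠ 0} := ⟨fun u => u.2 (Subsingleton.elim _ _)⟩
    simp [specNorm]
  · rw [← inv_mul_le_iff₀ (by exact_mod_cast hd), ← one_div]
    exact le_ciSup (f := fun p : {p : Fin L × Fin L // p.1 ≠ p.2} =>
      (1 / (d : ℝ)) * specNorm (bgram A p.1.1 p.1.2)) (Set.finite_range _).bddAbove ⟨(i, j), hij⟩

theorem e2norm_bgram_mulVec_le {i j : Fin L} (hij : i ≠ j) (u : Fin d → ℝ) :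
    e2norm (bgram A i j *ᵥ u) ≤ d * blockCoh A * e2norm u :=
  (e2norm_mulVec_le _ u).trans
    (mul_le_mul_of_nonneg_right (specNorm_bgram_le A hij) (e2norm_nonneg u))

theorem mul_e2norm_le_e2norm_bgram_self_mulVec {l : Fin L}
    (hA : ∀ j, e2norm (acol A l j) = 1) (u : Fin d → ℝ) :
    (1 - ((d : ℝ) - 1) * subCoh A) * e2norm u ≤ e2norm (bgram A l l *ᵥ u) := by
  have hdiag : ∀ a, 1 ≤ bgram A l l a a := fun a =>
    calc (1 : ℝ) = e2norm (acol A l a) ^ 2 := by rw [hA, one_pow]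
      _ ≤ bgram A l l a a := (e2norm_sq _).le
  have hquad := mul_dotProduct_self_le_dotProduct_mulVec (subCoh_nonneg A) hdiag
    (fun _ _ => abs_bgram_self_le_subCoh A l) u
  rw [Fintype.card_fin] at hquad
  exact mul_e2norm_le_of_mul_dotProduct_self_le hquad

theorem e2norm_blkT_sum_colBlock_mulVec_le {l : Fin L} {T : Finset (Fin L)} (hl : l ∉ T)
    (x : Fin L → Fin d → ℝ) :
    e2norm (blkT A l (∑ j ∈ T, colBlock A j *ᵥ x j)) ≤
      d * blockCoh A * ∑ j ∈ T, e2norm (x j) := by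
  rw [blkT_sum_colBlock_mulVec, mul_sum]
  exact (e2norm_sum_le _ _).trans (sum_le_sum fun j hj =>
    e2norm_bgram_mulVec_le A (ne_of_mem_of_not_mem hj hl).symm (x j))

theorem blkT_eq_of_dotp_sub_eq_zero {l : Fin L} {v y : Fin m → ℝ}
    (h : ∀ j, dotp (acol A l j) (fun i => v i - y i) = 0) : blkT A l y = blkT A l v := by
  have hsub : blkT A l (v - y) = 0 := funext h
  rw [blkT_eq_mulVec, mulVec_sub, sub_eq_zero] at hsub
  exact hsub.symm

variable {S : Finset (Fin L)}

theorem coherence_condition_of_subset {I : Finset (Fin L)} (hS : S ⊆ I)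
    (h : 0 < 1 - ((d : ℝ) - 1) * subCoh A - (2 * (#I : ℝ) - 1) * d * blockCoh A) :
    0 < 1 - ((d : ℝ) - 1) * subCoh A - (2 * (#S : ℝ) - 1) * d * blockCoh A := by
  refine h.trans_le ?_
  have := blockCoh_nonneg A
  gcongr

variable {A}

theorem sum_e2norm_le_of_e2norm_blkT_le {N : ℝ} (hN : 0 ≤ N)
    (hA : ∀ l ∈ S, ∀ j, e2norm (acol A l j) = 1)
    (hcond : 0 < 1 - ((d : ℝ) - 1) * subCoh A - (2 * (#S : ℝ) - 1) * d * blockCoh A)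
    {c : Fin L → Fin d → ℝ}
    (hc : ∀ l ∈ S, e2norm (blkT A l (∑ j ∈ S, colBlock A j *ᵥ c j)) ≤ d * blockCoh A * N) :
    ∑ j ∈ S, e2norm (c j) ≤ N := by
  refine sum_le_of_diag_of_offDiag_of_norm_sum_le
    (w := fun i j => WithLp.toLp 2 (bgram A i j *ᵥ c j))
    (mul_blockCoh_nonneg A) hN (by rwa [← mul_assoc]) ?_ ?_ ?_
  · intro i hi
    rw [← e2norm_eq_norm_toLp]
    exact mul_e2norm_le_e2norm_bgram_self_mulVec A (hA i hi) (c i)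
  · intro i _ j _ hij
    rw [← e2norm_eq_norm_toLp]
    exact e2norm_bgram_mulVec_le A hij (c j)
  · intro i hi
    rw [← WithLp.toLp_sum, ← e2norm_eq_norm_toLp, ← blkT_sum_colBlock_mulVec]
    exact hc i hi

theorem e2norm_blkT_le_of_blkT_eq {T : Finset (Fin L)} (hST : Disjoint S T)
    (hA : ∀ l ∈ S, ∀ j, e2norm (acol A l j) = 1)
    (hcond : 0 < 1 - ((d : ℝ) - 1) * subCoh A - (2 * (#S : ℝ) - 1) * d * blockCoh A)
    {c x : Fin L → Fin d → ℝ}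
    (hproj : ∀ l ∈ S, blkT A l (∑ j ∈ S, colBlock A j *ᵥ c j) =
      blkT A l (∑ j ∈ T, colBlock A j *ᵥ x j)) (l : Fin L) :
    e2norm (blkT A l (∑ j ∈ S, colBlock A j *ᵥ c j)) ≤
      d * blockCoh A * ∑ j ∈ T, e2norm (x j) := by
  have hmem : ∀ i ∈ S, e2norm (blkT A i (∑ j ∈ S, colBlock A j *ᵥ c j)) ≤
      d * blockCoh A * ∑ j ∈ T, e2norm (x j) := fun i hi => by
    rw [hproj i hi]
    exact e2norm_blkT_sum_colBlock_mulVec_le A (disjoint_left.1 hST hi) x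
  by_cases hl : l ∈ S
  · exact hmem l hl
  · have hcoeff : ∑ j ∈ S, e2norm (c j) ≤ ∑ j ∈ T, e2norm (x j) :=
      sum_e2norm_le_of_e2norm_blkT_le (sum_nonneg fun j _ => e2norm_nonneg _) hA hcond hmem
    exact (e2norm_blkT_sum_colBlock_mulVec_le A hl c).trans
      (mul_le_mul_of_nonneg_left hcoeff (mul_blockCoh_nonneg A))

theorem stmt7_general {I1 : Finset (Fin L)} (hS : S ⊆ I1)
    (hA : ∀ l ∈ S, ∀ j, e2norm (acol A l j) = 1)
    (hcond : 0 < 1 - ((d : ℝ) - 1) * subCoh A - (2 * (#S : ℝ) - 1) * d * blockCoh A)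
    {xt : Fin L → Fin d → ℝ} {v PSv : Fin m → ℝ}
    (hv : v = fun i => ∑ l ∈ I1 \ S, ∑ j, A i (l, j) * xt l j)
    (hPSv1 : ∃ c : Fin L → Fin d → ℝ, ∀ i, PSv i = ∑ l ∈ S, ∑ j, A i (l, j) * c l j)
    (hPSv2 : ∀ l ∈ S, ∀ j, dotp (acol A l j) (fun i => v i - PSv i) = 0) (l : Fin L) :
    e2norm (blkT A l PSv) ≤ (d : ℝ) * blockCoh A * ((#I1 : ℝ) - (#S : ℝ)) *
      ⨆ l : {l : Fin L // l ∈ I1 \ S}, e2norm (xt l.1) := by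
  obtain ⟨c, hc⟩ := hPSv1
  rw [← sum_colBlock_mulVec] at hv
  obtain rfl : PSv = ∑ j ∈ S, colBlock A j *ᵥ c j := by
    rw [sum_colBlock_mulVec]
    exact funext hc
  subst hv
  rw [← cast_card_sdiff hS, mul_assoc]
  exact (e2norm_blkT_le_of_blkT_eq disjoint_sdiff hA hcond
    (fun i hi => blkT_eq_of_dotp_sub_eq_zero A (hPSv2 i hi)) l).trans
    (mul_le_mul_of_nonneg_left (sum_e2norm_le_card_mul_iSup _ xt) (mul_blockCoh_nonneg A))

end BlockMatrix

/-- **Eq. (30) of the paper.**  Assume `1 - (d-1)ν - (2K-1)dμ_B > 0`.  For `S ⊆ I1` with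
`|S| = k < K`, `v = Σ_{l ∈ I1∖S} A_l x̃_l` and `P_S v` the orthogonal projection of `v` onto
the span of the blocks `A_l, l ∈ S`,
`max_{l ∈ I1} ‖A_lᵀ P_S v‖₂ ≤ dμ_B (K-k) · max_{l ∈ I1∖S} ‖x̃_l‖₂`. -/
theorem stmt7 {m L d K k : ℕ}
    (hm : m < L * d) (hd : 0 < d)
    (A : Matrix (Fin m) (Fin L × Fin d) ℝ)
    (hA : ∀ l j, e2norm (acol A l j) = 1)
    (μB ν : ℝ) (hμB : μB = blockCoh A) (hν : ν = subCoh A)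
    (hcond : 0 < 1 - ((d : ℝ) - 1) * ν - (2 * (K : ℝ) - 1) * d * μB)
    (I1 : Finset (Fin L)) (hcard : I1.card = K) (hKL : K < L)
    (S : Finset (Fin L)) (hS : S ⊆ I1) (hSk : S.card = k) (hk : k < K)
    (xt : Fin L → Fin d → ℝ)
    (v : Fin m → ℝ) (hv : v = fun i => ∑ l ∈ I1 \ S, ∑ j, A i (l, j) * xt l j)
    (PSv : Fin m → ℝ)
    (hPSv1 : ∃ c : Fin L → Fin d → ℝ, ∀ i, PSv i = ∑ l ∈ S, ∑ j, A i (l, j) * c l j)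
    (hPSv2 : ∀ l ∈ S, ∀ j, dotp (acol A l j) (fun i => v i - PSv i) = 0) :
    (⨆ l : {l : Fin L // l ∈ I1}, e2norm (blkT A l.1 PSv)) ≤
      (d : ℝ) * μB * ((K : ℝ) - (k : ℝ)) *
        ⨆ l : {l : Fin L // l ∈ I1 \ S}, e2norm (xt l.1) := by
  subst hμB hν hcard hSk
  have : Nonempty {l // l ∈ I1} := (card_pos.1 (Nat.zero_lt_of_lt hk)).to_subtype
  exact ciSup_le fun l => stmt7_general hS (fun l _ => hA l)
    (coherence_condition_of_subset A hS hcond) hv hPSv1 hPSv2 l
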